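/- Let μ and ν be dominant integral weights of 𝔤 such that β := ν̄ − μ is a root. Suppose there is a short simple root α_j (i.e. some root of the same simple factor is strictly longer than α_j) with ⟨μ, α_j∨⟩ = 0 such that β is weakly orthogonal to α_j (i.e. ⟨β, α_j⟩ = 0 and β + α_j is a root). Then the 𝔤-invariant subspace of adj(𝔤) ⊗ V_μ ⊗ V_ν is zero. -/

import Mathlib

open scoped TensorProduct Classical
open LieAlgebra LieModule Module

namespace AdjPaper

variable {L : Type} [LieRing L] [LieAlgebra ℂ L]

/-- `χ` is a root of `L` relative to the Cartan subalgebra `H`: a nonzero linear functional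
on `H` with nontrivial root space. -/
def IsRoot (H : LieSubalgebra ℂ L) [H.IsCartanSubalgebra] (χ : Module.Dual ℂ H) : Prop :=
  χ ≠ 0 ∧ rootSpace H ⇑χ ≠ ⊥

/-- `t` is the coroot `χ∨` of the root `χ`: it lies in `⁅𝔤_χ, 𝔤_{-χ}⁆` and satisfies
`χ t = 2`. -/
def IsCoroot (H : LieSubalgebra ℂ L) [H.IsCartanSubalgebra] (χ : Module.Dual ℂ H) (t : H) : Prop :=
  χ t = 2 ∧ ∃ e ∈ rootSpace H ⇑χ, ∃ f ∈ rootSpace H ⇑(-χ), (t : L) = ⁅e, f⁆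

/-- `α` enumerates the simple roots of a base of the root system of `(L, H)`. -/
structure IsBase (H : LieSubalgebra ℂ L) [H.IsCartanSubalgebra] {r : ℕ} (α : Fin r → Module.Dual ℂ H) : Prop where
  isRoot : ∀ j, IsRoot H (α j)
  indep : LinearIndependent ℂ α
  pos_neg : ∀ χ : Module.Dual ℂ H, IsRoot H χ →
    (∃ c : Fin r → ℕ, χ = ∑ j, (c j : ℂ) • α j) ∨ (∃ c : Fin r → ℕ, χ = -∑ j, (c j : ℂ) • α j)

/-- `χ` is a positive root relative to the base `α`. -/
def IsPosRoot (H : LieSubalgebra ℂ L) [H.IsCartanSubalgebra] {r : ℕ} (α : Fin r → Module.Dual ℂ H)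
    (χ : Module.Dual ℂ H) : Prop :=
  IsRoot H χ ∧ ∃ c : Fin r → ℕ, χ = ∑ j, (c j : ℂ) • α j

/-- A weight `μ` is dominant integral: all its pairings `⟨μ, α_j∨⟩ = μ (hc j)` with the
simple coroots `hc j` are non-negative integers. -/
def IsDomInt {H : LieSubalgebra ℂ L} {r : ℕ} (hc : Fin r → H) (μ : Module.Dual ℂ H) : Prop :=
  ∀ j, ∃ n : ℕ, μ (hc j) = (n : ℂ)

/-- `V` is an irreducible `L`-module with highest weight `μ` (relative to the Cartan
subalgebra `H` and the base `α`): it is irreducible and possesses a nonzero vector of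
`H`-weight `μ` annihilated by all positive root spaces. -/
def IsHWIrrep (H : LieSubalgebra ℂ L) [H.IsCartanSubalgebra] {r : ℕ} (α : Fin r → Module.Dual ℂ H)
    (μ : Module.Dual ℂ H) (V : Type) [AddCommGroup V] [Module ℂ V]
    [LieRingModule L V] [LieModule ℂ L V] : Prop :=
  IsSimpleOrder (LieSubmodule ℂ L V) ∧
  ∃ v : V, v ≠ 0 ∧ (∀ x : H, ⁅(x : L), v⁆ = μ x • v) ∧
    ∀ χ : Module.Dual ℂ H, IsPosRoot H α χ → ∀ e ∈ rootSpace H ⇑χ, ⁅e, v⁆ = 0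

/-- `W` is isomorphic to the dual representation `V*`: there is a nondegenerate
`𝔤`-invariant pairing `W × V → ℂ`. -/
def IsDualPair (W V : Type) [AddCommGroup W] [Module ℂ W] [LieRingModule L W]
    [AddCommGroup V] [Module ℂ V] [LieRingModule L V] : Prop :=
  ∃ B : W →ₗ[ℂ] V →ₗ[ℂ] ℂ,
    (∀ w, (∀ v, B w v = 0) → w = 0) ∧ (∀ v, (∀ w, B w v = 0) → v = 0) ∧
    ∀ (x : L) (w : W) (v : V), B ⁅x, w⁆ v + B w ⁅x, v⁆ = 0

/-- `V` is an orthogonal representation: it has a nondegenerate invariant symmetric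
bilinear form. -/
def IsOrthogonalRep (V : Type) [AddCommGroup V] [Module ℂ V] [LieRingModule L V] : Prop :=
  ∃ B : V →ₗ[ℂ] V →ₗ[ℂ] ℂ,
    (∀ v w, B v w = B w v) ∧ (∀ v, (∀ w, B v w = 0) → v = 0) ∧
    ∀ (x : L) (v w : V), B ⁅x, v⁆ w + B v ⁅x, w⁆ = 0

/-- `V` is a symplectic representation: it has a nondegenerate invariant alternating
bilinear form. -/
def IsSymplecticRep (V : Type) [AddCommGroup V] [Module ℂ V] [LieRingModule L V] : Prop :=
  ∃ B : V →ₗ[ℂ] V →ₗ[ℂ] ℂ,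
    (∀ v, B v v = 0) ∧ (∀ v, (∀ w, B v w = 0) → v = 0) ∧
    ∀ (x : L) (v w : V), B ⁅x, v⁆ w + B v ⁅x, w⁆ = 0

variable (L) in
/-- The operator on `adj(𝔤) ⊗ V ⊗ V` exchanging the two copies of `V`. -/
noncomputable def swapMap (V : Type) [AddCommGroup V] [Module ℂ V] :
    (L ⊗[ℂ] (V ⊗[ℂ] V)) →ₗ[ℂ] (L ⊗[ℂ] (V ⊗[ℂ] V)) :=
  LinearMap.lTensor L (TensorProduct.comm ℂ V V).toLinearMap

variable (L) in
/-- The `𝔤`-invariant subspace of `adj(𝔤) ⊗ S²V`, realised inside `adj(𝔤) ⊗ V ⊗ V` as the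
invariant vectors fixed by the swap of the two copies of `V`. -/
noncomputable def symSquareInvariants (V : Type) [AddCommGroup V] [Module ℂ V]
    [LieRingModule L V] [LieModule ℂ L V] : Submodule ℂ (L ⊗[ℂ] (V ⊗[ℂ] V)) :=
  (maxTrivSubmodule ℂ L (L ⊗[ℂ] (V ⊗[ℂ] V)) : Submodule ℂ (L ⊗[ℂ] (V ⊗[ℂ] V))) ⊓
    LinearMap.ker (swapMap L V - LinearMap.id)

variable (L) in
/-- The `𝔤`-invariant subspace of `adj(𝔤) ⊗ Λ²V`, realised inside `adj(𝔤) ⊗ V ⊗ V` as the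
invariant vectors anti-fixed by the swap of the two copies of `V`. -/
noncomputable def altSquareInvariants (V : Type) [AddCommGroup V] [Module ℂ V]
    [LieRingModule L V] [LieModule ℂ L V] : Submodule ℂ (L ⊗[ℂ] (V ⊗[ℂ] V)) :=
  (maxTrivSubmodule ℂ L (L ⊗[ℂ] (V ⊗[ℂ] V)) : Submodule ℂ (L ⊗[ℂ] (V ⊗[ℂ] V))) ⊓
    LinearMap.ker (swapMap L V + LinearMap.id)


/-- `t ∈ 𝔥` represents the weight `χ` via the Killing form: `κ(t, ·) = χ` on `𝔥`.  Under
this identification, `⟨χ, ψ⟩ = ψ t` for weights `χ, ψ`. -/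
def IsKillingDual (H : LieSubalgebra ℂ L) (χ : Module.Dual ℂ H) (t : H) : Prop :=
  ∀ x : H, killingForm ℂ L (t : L) (x : L) = χ x

/-- Two roots lie in the same simple factor iff they are connected by a chain of pairwise
non-orthogonal roots (orthogonality w.r.t. the Killing form). -/
def SameFactor (H : LieSubalgebra ℂ L) [H.IsCartanSubalgebra] (χ ψ : Module.Dual ℂ H) : Prop :=
  Relation.ReflTransGen
    (fun a b => IsRoot H a ∧ IsRoot H b ∧ ∃ ta : H, IsKillingDual H a ta ∧ b ta ≠ 0) χ ψ

/-- Smallest subspace containing `v` and closed under the action of `P`. -/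
inductive Gen {M : Type} [AddCommGroup M] [Module ℂ M] [LieRingModule L M]
    (P : L → Prop) (v : M) : M → Prop
  | base : Gen P v v
  | zero : Gen P v 0
  | add (a b : M) : Gen P v a → Gen P v b → Gen P v (a + b)
  | smul (c : ℂ) (a : M) : Gen P v a → Gen P v (c • a)
  | step (x : L) (a : M) : P x → Gen P v a → Gen P v ⁅x, a⁆

lemma Gen.lie {M : Type} [AddCommGroup M] [Module ℂ M] [LieRingModule L M] [LieModule ℂ L M]
    {P : L → Prop} {v : M} (h : ∀ y : L, Gen P v ⁅y, v⁆) {m : M} (hm : Gen P v m) :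
    ∀ y : L, Gen P v ⁅y, m⁆ := by
  induction hm with
  | base => exact h
  | zero => intro y; rw [lie_zero]; exact Gen.zero
  | add a b _ _ iha ihb => intro y; rw [lie_add]; exact Gen.add _ _ (iha y) (ihb y)
  | smul c a _ ih => intro y; rw [lie_smul]; exact Gen.smul _ _ (ih y)
  | step x a hx _ ih =>
    intro y
    rw [leibniz_lie]
    exact Gen.add _ _ (ih _) (Gen.step _ _ hx (ih y))

/-- The Lie submodule generated by `v` when the generated subspace is stable. -/
def genSub {M : Type} [AddCommGroup M] [Module ℂ M] [LieRingModule L M] [LieModule ℂ L M]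
    (P : L → Prop) (v : M) (h : ∀ y : L, Gen P v ⁅y, v⁆) : LieSubmodule ℂ L M where
  carrier := {m | Gen P v m}
  add_mem' := fun ha hb => Gen.add _ _ ha hb
  zero_mem' := Gen.zero
  smul_mem' := fun c _ ha => Gen.smul c _ ha
  lie_mem := fun {x _} hm => Gen.lie h hm x

lemma gen_mem {M : Type} [AddCommGroup M] [Module ℂ M] [LieRingModule L M]
    {P : L → Prop} {v : M} (K : Submodule ℂ M) (hv : v ∈ K)
    (hK : ∀ x, P x → ∀ m ∈ K, ⁅x, m⁆ ∈ K) {m : M} (hm : Gen P v m) : m ∈ K := by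
  induction hm with
  | base => exact hv
  | zero => exact K.zero_mem
  | add a b _ _ iha ihb => exact K.add_mem iha ihb
  | smul c a _ ih => exact K.smul_mem c ih
  | step x a hx _ ih => exact hK x hx a ih

/-- Positive root vector. -/
def PosV (H : LieSubalgebra ℂ L) [H.IsCartanSubalgebra] {r : ℕ} (α : Fin r → Module.Dual ℂ H)
    (x : L) : Prop := ∃ χ, IsPosRoot H α χ ∧ x ∈ rootSpace H ⇑χ

/-- Negative root vector. -/
def NegV (H : LieSubalgebra ℂ L) [H.IsCartanSubalgebra] {r : ℕ} (α : Fin r → Module.Dual ℂ H)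
    (x : L) : Prop := ∃ χ, IsPosRoot H α χ ∧ x ∈ rootSpace H ⇑(-χ)

section
variable [FiniteDimensional ℂ L] [LieAlgebra.IsSemisimple ℂ L]
  {H : LieSubalgebra ℂ L} [H.IsCartanSubalgebra]
  {r : ℕ} {α : Fin r → Module.Dual ℂ H}

lemma root_lie {χ : Module.Dual ℂ H} {x : L} (hx : x ∈ rootSpace H ⇑χ) (h : H) :
    ⁅(h : L), x⁆ = χ h • x :=
  IsKilling.lie_eq_smul_of_mem_rootSpace hx h

lemma mem_root {χ : Module.Dual ℂ H} {x : L} (hx : ∀ h : H, ⁅(h : L), x⁆ = χ h • x) :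
    x ∈ rootSpace H ⇑χ := by
  refine (mem_genWeightSpace L (⇑χ) x).mpr fun h => ⟨1, ?_⟩
  simp [hx h]

lemma isRoot_neg {χ : Module.Dual ℂ H} (h : IsRoot H χ) : IsRoot H (-χ) := by
  refine ⟨neg_ne_zero.mpr h.1, fun h2 => h.2 ?_⟩
  rw [LieSubmodule.eq_bot_iff]
  intro x hx
  have : x ∈ LinearMap.ker (killingForm ℂ L) := by
    apply mem_ker_killingForm_of_mem_rootSpace_of_forall_rootSpace_neg ℂ L H hx
    intro y hy
    have hy' : y ∈ rootSpace H ⇑(-χ) := hy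
    rw [h2, LieSubmodule.mem_bot] at hy'
    simp [hy']
  simpa using this

lemma decomp (hbase : IsBase H α) (S : Submodule ℂ L) (hH : ∀ h : H, (h : L) ∈ S)
    (hP : ∀ x, PosV H α x → x ∈ S) (hN : ∀ x, NegV H α x → x ∈ S) (y : L) : y ∈ S := by
  have hy : y ∈ ⨆ χ : Weight ℂ H L, rootSpace H ⇑χ := by
    rw [iSup_genWeightSpace_eq_top' ℂ H L]; trivial
  induction hy using LieSubmodule.iSup_induction' with
  | mem χ y hy =>
    by_cases h0 : χ.IsZero
    · have h0' : (χ : H → ℂ) = 0 := h0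
      rw [h0'] at hy
      have : y ∈ H := by simpa using hy
      exact hH ⟨y, this⟩
    · have hr : IsRoot H χ.toLinear := by
        refine ⟨fun h => h0 ?_, χ.genWeightSpace_ne_bot⟩
        have := congrArg (fun f : Module.Dual ℂ H => (f : H → ℂ)) h
        exact this
      rcases hbase.pos_neg _ hr with ⟨c, hc⟩ | ⟨c, hc⟩
      · exact hP y ⟨_, ⟨hr, c, hc⟩, hy⟩
      · refine hN y ⟨-χ.toLinear, ⟨isRoot_neg hr, c, by rw [hc, neg_neg]⟩, ?_⟩
        rw [neg_neg]; exact hy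
  | zero => exact S.zero_mem
  | add a b _ _ ha hb => exact S.add_mem ha hb

/-- Generation of a simple module from a highest weight vector. -/
lemma gen_all {V : Type} [AddCommGroup V] [Module ℂ V] [LieRingModule L V] [LieModule ℂ L V]
    (hbase : IsBase H α) (P Q : L → Prop) (v : V) (μ : Module.Dual ℂ H)
    (hPQ : (P = PosV H α ∧ Q = NegV H α) ∨ (P = NegV H α ∧ Q = PosV H α))
    (hv : ∀ h : H, ⁅(h : L), v⁆ = μ h • v) (hQ : ∀ x, Q x → ⁅x, v⁆ = 0) (y : L) :
    Gen P v ⁅y, v⁆ := by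
  let S : Submodule ℂ L :=
    { carrier := {y | Gen P v ⁅y, v⁆}
      add_mem' := by
        intro a b ha hb
        show Gen P v ⁅a + b, v⁆
        rw [add_lie]; exact Gen.add _ _ ha hb
      zero_mem' := by
        show Gen P v ⁅(0 : L), v⁆
        rw [zero_lie]; exact Gen.zero
      smul_mem' := by
        intro c a ha
        show Gen P v ⁅c • a, v⁆
        rw [smul_lie]; exact Gen.smul _ _ ha }
  have hPS : ∀ x, P x → x ∈ S := fun x hx => Gen.step x v hx Gen.base
  have hQS : ∀ x, Q x → x ∈ S := fun x hx => by
    show Gen P v ⁅x, v⁆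
    rw [hQ x hx]; exact Gen.zero
  have hHS : ∀ h : H, (h : L) ∈ S := fun h => by
    show Gen P v ⁅(h : L), v⁆
    rw [hv]; exact Gen.smul _ _ Gen.base
  rcases hPQ with ⟨rfl, rfl⟩ | ⟨rfl, rfl⟩
  · exact decomp hbase S hHS hPS hQS y
  · exact decomp hbase S hHS hQS hPS y

lemma exists_height (hbase : IsBase H α) : ∃ d : H, ∀ χ, IsPosRoot H α χ →
    ∃ k : ℕ, χ d = (k : ℂ) + 1 := by
  have hsurj : ∃ d : H, ∀ i, α i d = 1 := by
    obtain ⟨F, hF⟩ : ∃ F : Module.Dual ℂ (Module.Dual ℂ H), ∀ i, F (α i) = 1 := by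
      obtain ⟨F, hF⟩ := (LinearMap.exists_extend
        ((Basis.span hbase.indep).constr ℂ (fun _ => (1 : ℂ))))
      refine ⟨F, fun i => ?_⟩
      have h1 := congrArg (fun g => g (Basis.span hbase.indep i)) hF
      simp only [Basis.constr_basis, LinearMap.comp_apply, Submodule.subtype_apply] at h1
      rw [← h1, Basis.span_apply]
    refine ⟨(Module.evalEquiv ℂ H).symm F, fun i => ?_⟩
    rw [← hF i]
    simp
  obtain ⟨d, hd⟩ := hsurj
  refine ⟨d, fun χ hχ => ?_⟩
  obtain ⟨c, hc⟩ := hχ.2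
  have hval : χ d = ((∑ i, c i : ℕ) : ℂ) := by
    rw [hc]; simp [hd]
  have hne : (∑ i, c i) ≠ 0 := by
    intro h0
    rw [Finset.sum_eq_zero_iff] at h0
    apply hχ.1.1
    rw [hc]
    exact Finset.sum_eq_zero fun i hi => by simp [h0 i hi]
  obtain ⟨k, hk⟩ := Nat.exists_eq_succ_of_ne_zero hne
  exact ⟨k, by rw [hval, hk]; push_cast; ring⟩

lemma exists_functional (hbase : IsBase H α) {V : Type} [AddCommGroup V] [Module ℂ V]
    [LieRingModule L V] [LieModule ℂ L V] [IsSimpleOrder (LieSubmodule ℂ L V)]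
    (μ : Module.Dual ℂ H) (v : V) (hv0 : v ≠ 0)
    (hv : ∀ h : H, ⁅(h : L), v⁆ = μ h • v) (hQ : ∀ x, PosV H α x → ⁅x, v⁆ = 0) :
    ∃ ξ : V →ₗ[ℂ] ℂ, ξ ≠ 0 ∧ (∀ h : H, ⁅(h : L), ξ⁆ = (-μ) h • ξ) ∧
      ∀ x, NegV H α x → ⁅x, ξ⁆ = 0 := by
  obtain ⟨d, hd⟩ := exists_height hbase
  let D : Module.End ℂ V := toEnd ℂ L V (d : L)
  let N : Submodule ℂ V := ⨆ k : ℕ, D.eigenspace (μ d - ((k : ℂ) + 1))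
  have hvN : v ∉ N := by
    intro hvN
    have hdis := (Module.End.eigenspaces_iSupIndep D) (μ d)
    have h1 : v ∈ D.eigenspace (μ d) := by
      rw [Module.End.mem_eigenspace_iff]; exact hv d
    have h2 : N ≤ ⨆ j, ⨆ (_ : j ≠ μ d), D.eigenspace j := by
      refine iSup_le fun k => ?_
      refine le_iSup₂_of_le (μ d - ((k : ℂ) + 1)) ?_ le_rfl
      intro h
      have : ((k : ℂ) + 1) = 0 := by linear_combination -h
      exact Nat.cast_add_one_ne_zero k this
    exact hv0 (Submodule.disjoint_def.mp hdis v h1 (h2 hvN))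
  have hNH : ∀ h : H, ∀ n ∈ N, ⁅(h : L), n⁆ ∈ N := by
    intro h n hn
    induction hn using Submodule.iSup_induction' with
    | mem k x hx =>
      refine Submodule.mem_iSup_of_mem k ?_
      rw [Module.End.mem_eigenspace_iff] at hx ⊢
      have hx' : ⁅(d : L), x⁆ = (μ d - ((k : ℂ) + 1)) • x := hx
      show ⁅(d : L), ⁅(h : L), x⁆⁆ = _
      have hc : ⁅(d : L), (h : L)⁆ = 0 := by
        have : ⁅d, h⁆ = 0 := trivial_lie_zero _ _ _ _
        have := congrArg (fun z : H => (z : L)) this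
        simpa using this
      rw [leibniz_lie, hc, zero_lie, zero_add, hx', lie_smul]
    | zero => rw [lie_zero]; exact N.zero_mem
    | add a b _ _ ha hb => rw [lie_add]; exact N.add_mem ha hb
  have hshift : ∀ x, NegV H α x → ∀ (c : ℂ) (u : V), ⁅(d : L), u⁆ = c • u →
      ∃ l : ℕ, ⁅(d : L), ⁅x, u⁆⁆ = (c - ((l : ℂ) + 1)) • ⁅x, u⁆ := by
    rintro x ⟨χ, hχ, hx⟩ c u hu
    obtain ⟨l, hl⟩ := hd χ hχ
    refine ⟨l, ?_⟩
    rw [leibniz_lie, root_lie hx, hu, lie_smul, smul_lie, ← add_smul]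
    congr 1
    simp [hl]; ring
  have hNN : ∀ x, NegV H α x → ∀ n ∈ N, ⁅x, n⁆ ∈ N := by
    intro x hx n hn
    induction hn using Submodule.iSup_induction' with
    | mem k u hu =>
      rw [Module.End.mem_eigenspace_iff] at hu
      obtain ⟨l, hl⟩ := hshift x hx _ u hu
      refine Submodule.mem_iSup_of_mem (k + l + 1) ?_
      rw [Module.End.mem_eigenspace_iff]
      show ⁅(d : L), ⁅x, u⁆⁆ = _
      rw [hl]; congr 1; push_cast; ring
    | zero => rw [lie_zero]; exact N.zero_mem
    | add a b _ _ ha hb => rw [lie_add]; exact N.add_mem ha hb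
  have hvx : ∀ x, NegV H α x → ⁅x, v⁆ ∈ N := by
    intro x hx
    obtain ⟨l, hl⟩ := hshift x hx _ v (hv d)
    refine Submodule.mem_iSup_of_mem l ?_
    rw [Module.End.mem_eigenspace_iff]
    exact hl
  let K : Submodule ℂ V := Submodule.span ℂ {v} ⊔ N
  have hKV : ∀ u : V, ∃ c : ℂ, ∃ n ∈ N, u = c • v + n := by
    have hgen := gen_all (V := V) hbase (NegV H α) (PosV H α) v μ (Or.inr ⟨rfl, rfl⟩) hv hQ
    have htop : genSub (NegV H α) v hgen = ⊤ := by
      rcases eq_bot_or_eq_top (genSub (NegV H α) v hgen) with h | h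
      · exfalso
        have : v ∈ genSub (NegV H α) v hgen := Gen.base
        rw [h, LieSubmodule.mem_bot] at this
        exact hv0 this
      · exact h
    intro u
    have hu : u ∈ genSub (NegV H α) v hgen := by rw [htop]; trivial
    have hu' : u ∈ K := by
      refine gen_mem K (Submodule.mem_sup_left (Submodule.mem_span_singleton_self v)) ?_ hu
      intro x hx m hm
      obtain ⟨a, ha, n, hn, rfl⟩ := Submodule.mem_sup.mp hm
      obtain ⟨c, rfl⟩ := Submodule.mem_span_singleton.mp ha
      rw [lie_add, lie_smul]
      exact Submodule.mem_sup_right (N.add_mem (N.smul_mem _ (hvx x hx)) (hNN x hx n hn))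
    obtain ⟨a, ha, n, hn, rfl⟩ := Submodule.mem_sup.mp hu'
    obtain ⟨c, rfl⟩ := Submodule.mem_span_singleton.mp ha
    exact ⟨c, n, hn, rfl⟩
  obtain ⟨ξ, hξ, hξN⟩ := Submodule.exists_le_ker_of_notMem hvN
  have hker : ∀ n ∈ N, ξ n = 0 := fun n hn => hξN hn
  refine ⟨ξ, fun h => hξ (by rw [h]; rfl), fun h => ?_, fun x hx => ?_⟩
  · ext u
    obtain ⟨c, n, hn, rfl⟩ := hKV u
    rw [Module.Dual.lie_apply, lie_add, lie_smul, hv]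
    simp [hker n hn, hker _ (hNH h n hn)]
    ring
  · ext u
    obtain ⟨c, n, hn, rfl⟩ := hKV u
    rw [Module.Dual.lie_apply, lie_add, lie_smul]
    simp [hker _ (hvx x hx), hker _ (hNN x hx n hn)]

/-- The lowest weight functional generates the dual under positive root vectors. -/
lemma dual_gen (hbase : IsBase H α) {V : Type} [AddCommGroup V] [Module ℂ V]
    [LieRingModule L V] [LieModule ℂ L V] [FiniteDimensional ℂ V]
    [IsSimpleOrder (LieSubmodule ℂ L V)]
    (μ : Module.Dual ℂ H) (ξ : V →ₗ[ℂ] ℂ) (hξ0 : ξ ≠ 0)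
    (hξ : ∀ h : H, ⁅(h : L), ξ⁆ = μ h • ξ) (hQ : ∀ x, NegV H α x → ⁅x, ξ⁆ = 0)
    (K : Submodule ℂ (V →ₗ[ℂ] ℂ)) (hK0 : ξ ∈ K)
    (hK : ∀ x, PosV H α x → ∀ m ∈ K, ⁅x, m⁆ ∈ K) (η : V →ₗ[ℂ] ℂ) : η ∈ K := by
  have hgen := gen_all (V := V →ₗ[ℂ] ℂ) hbase (PosV H α) (NegV H α) ξ μ
    (Or.inl ⟨rfl, rfl⟩) hξ hQ
  let S := genSub (PosV H α) ξ hgen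
  let A : LieSubmodule ℂ L V :=
    { carrier := {v | ∀ ζ ∈ S, ζ v = 0}
      add_mem' := fun {a b} ha hb ζ hζ => by rw [map_add, ha ζ hζ, hb ζ hζ, add_zero]
      zero_mem' := fun ζ _ => map_zero ζ
      smul_mem' := fun c a ha ζ hζ => by rw [map_smul, ha ζ hζ, smul_zero]
      lie_mem := fun {x m} hm ζ hζ => by
        have := hm ⁅x, ζ⁆ (S.lie_mem hζ)
        rw [Module.Dual.lie_apply] at this
        exact neg_eq_zero.mp this }
  have hA : A = ⊥ := by
    rcases eq_bot_or_eq_top A with h | h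
    · exact h
    · exfalso
      apply hξ0
      ext u
      have hu : u ∈ A := by rw [h]; trivial
      exact hu ξ Gen.base
  have hS : (S : Submodule ℂ (V →ₗ[ℂ] ℂ)) = ⊤ := by
    have h1 : Submodule.dualCoannihilator (S : Submodule ℂ (Module.Dual ℂ V)) = ⊥ := by
      rw [Submodule.eq_bot_iff]
      intro u hu
      rw [Submodule.mem_dualCoannihilator] at hu
      have : u ∈ A := fun ζ hζ => hu ζ hζ
      rwa [hA, LieSubmodule.mem_bot] at this
    have h2 := Subspace.dualCoannihilator_dualAnnihilator_eq
      (W := (S : Submodule ℂ (Module.Dual ℂ V)))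
    rw [h1, Submodule.dualAnnihilator_bot] at h2
    exact h2.symm
  have hη : η ∈ (S : Submodule ℂ (V →ₗ[ℂ] ℂ)) := by rw [hS]; trivial
  exact gen_mem K hK0 hK hη

lemma sl2_of_coroot {χ : Module.Dual ℂ H} {t : H} {e f : L} (ht : χ t = 2)
    (he : e ∈ rootSpace H ⇑χ) (hf : f ∈ rootSpace H ⇑(-χ)) (hef : (t : L) = ⁅e, f⁆) :
    IsSl2Triple (t : L) e f where
  h_ne_zero := by
    intro h
    have : t = 0 := by ext; exact h
    rw [this] at ht
    simp at ht
  lie_e_f := hef.symm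
  lie_h_e_nsmul := by rw [root_lie he, ht, ← Nat.cast_smul_eq_nsmul ℂ]; norm_num
  lie_h_f_nsmul := by
    rw [root_lie hf, LinearMap.neg_apply, ht, ← Nat.cast_smul_eq_nsmul ℂ, neg_smul]; norm_num

lemma orth_coroot {χ β : Module.Dual ℂ H} {t s : H} {e f : L}
    (hf : f ∈ rootSpace H ⇑(-χ)) (hef : (t : L) = ⁅e, f⁆)
    (hs : IsKillingDual H χ s) (hβ : β s = 0) : β t = 0 := by
  have hinv : ∀ x : H, killingForm ℂ L ((t - killingForm ℂ L e f • s : H) : L) (x : L) = 0 := by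
    intro x
    have h1 : killingForm ℂ L (t : L) (x : L) = χ x * killingForm ℂ L e f := by
      rw [hef, killingForm, traceForm_apply_lie_apply, ← lie_skew f (x : L), root_lie hf]
      simp
    have h2 := hs x
    have h3 : ((t - killingForm ℂ L e f • s : H) : L) = (t : L) - killingForm ℂ L e f • (s : L) :=
      rfl
    rw [h3, map_sub, map_smul, LinearMap.sub_apply, LinearMap.smul_apply, h1, h2, smul_eq_mul]
    ring
  have hmem : ((t - killingForm ℂ L e f • s : H) : L) ∈ LinearMap.ker (killingForm ℂ L) := by
    apply mem_ker_killingForm_of_mem_rootSpace_of_forall_rootSpace_neg ℂ L H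
      (α := (0 : H → ℂ))
    · rw [rootSpace_zero_eq, LieSubalgebra.mem_toLieSubmodule]
      exact (t - killingForm ℂ L e f • s : H).2
    · intro y hy
      rw [neg_zero] at hy
      have hy' : y ∈ H := by simpa using hy
      exact hinv ⟨y, hy'⟩
  rw [IsKilling.ker_killingForm_eq_bot, Submodule.mem_bot] at hmem
  have h0 : t - killingForm ℂ L e f • s = 0 := by ext; exact hmem
  rw [sub_eq_zero.mp h0, map_smul, hβ, smul_zero]

lemma no_kill {χ β : Module.Dual ℂ H} {t : H} {e f z : L} (ht : χ t = 2)
    (he : e ∈ rootSpace H ⇑χ) (hf : f ∈ rootSpace H ⇑(-χ)) (hef : (t : L) = ⁅e, f⁆)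
    (hβ : β t = 0) (hβr : IsRoot H β) (hsum : IsRoot H (β + χ))
    (hz : z ∈ rootSpace H ⇑β) (hez : ⁅e, z⁆ = 0) : z = 0 := by
  have T := sl2_of_coroot ht he hf hef
  obtain ⟨y, hy, hy0⟩ : ∃ y ∈ rootSpace H ⇑(-(β + χ)), y ≠ 0 := by
    by_contra! hcon
    exact (isRoot_neg hsum).2 ((LieSubmodule.eq_bot_iff _).mpr hcon)
  have hey : ⁅e, y⁆ ≠ 0 := by
    intro hey
    have P : T.HasPrimitiveVectorWith y (-2 : ℂ) :=
      { ne_zero := hy0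
        lie_h := by rw [root_lie hy]; simp [ht, hβ]
        lie_e := hey }
    obtain ⟨n, hn⟩ := P.exists_nat
    have : ((n + 2 : ℕ) : ℂ) = 0 := by push_cast; rw [← hn]; ring
    rw [Nat.cast_eq_zero] at this
    omega
  have heym : ⁅e, y⁆ ∈ rootSpace H ⇑(-β) := by
    apply mem_root
    intro h
    rw [leibniz_lie, root_lie he, root_lie hy, lie_smul, smul_lie, ← add_smul]
    congr 1
    simp
  have hκ : killingForm ℂ L z ⁅e, y⁆ = 0 := by
    rw [killingForm, ← traceForm_apply_lie_apply, ← lie_skew, hez]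
    simp
  have hker : z ∈ LinearMap.ker (killingForm ℂ L) := by
    apply mem_ker_killingForm_of_mem_rootSpace_of_forall_rootSpace_neg ℂ L H hz
    intro u hu
    let w : Weight ℂ H L := ⟨⇑(-β), (isRoot_neg hβr).2⟩
    have hw : w.IsNonZero := by
      intro h
      apply (isRoot_neg hβr).1
      ext x
      exact congrFun h x
    have hfin := IsKilling.finrank_rootSpace_eq_one w hw
    have hu' : u ∈ rootSpace H ⇑w := hu
    have hey' : ⁅e, y⁆ ∈ rootSpace H ⇑w := heym
    obtain ⟨c, hc⟩ := (finrank_eq_one_iff_of_nonzero' (⟨⁅e, y⁆, hey'⟩ : rootSpace H ⇑w)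
      (fun h => hey (congrArg Subtype.val h))).mp hfin ⟨u, hu'⟩
    have hc' : c • ⁅e, y⁆ = u := congrArg Subtype.val hc
    rw [← hc', map_smul, hκ, smul_zero]
  simpa using hker

end

/-- Contraction of `L ⊗ V ⊗ U` with a functional on `V` and an element of `W`. -/
noncomputable def contr {V U : Type} [AddCommGroup V] [Module ℂ V] [AddCommGroup U] [Module ℂ U]
    (ξ : V →ₗ[ℂ] ℂ) (η : U →ₗ[ℂ] ℂ) : (L ⊗[ℂ] (V ⊗[ℂ] U)) →ₗ[ℂ] L :=
  (TensorProduct.rid ℂ L).toLinearMap ∘ₗ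
    LinearMap.lTensor L ((TensorProduct.rid ℂ ℂ).toLinearMap ∘ₗ TensorProduct.map ξ η)

@[simp] lemma contr_tmul {V U : Type} [AddCommGroup V] [Module ℂ V] [AddCommGroup U] [Module ℂ U]
    (ξ : V →ₗ[ℂ] ℂ) (η : U →ₗ[ℂ] ℂ) (a : L) (v : V) (u : U) :
    contr ξ η (a ⊗ₜ[ℂ] (v ⊗ₜ[ℂ] u)) = (ξ v * η u) • a := by
  simp [contr, mul_comm]

lemma contr_add_left {V U : Type} [AddCommGroup V] [Module ℂ V] [AddCommGroup U] [Module ℂ U]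
    (ξ ξ' : V →ₗ[ℂ] ℂ) (η : U →ₗ[ℂ] ℂ) (T : L ⊗[ℂ] (V ⊗[ℂ] U)) :
    contr (ξ + ξ') η T = contr ξ η T + contr ξ' η T := by
  have : contr (L := L) (ξ + ξ') η = contr ξ η + contr ξ' η := by
    ext a v u; simp [add_mul, add_smul]
  rw [this]; rfl

lemma contr_add_right {V U : Type} [AddCommGroup V] [Module ℂ V] [AddCommGroup U] [Module ℂ U]
    (ξ : V →ₗ[ℂ] ℂ) (η η' : U →ₗ[ℂ] ℂ) (T : L ⊗[ℂ] (V ⊗[ℂ] U)) :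
    contr ξ (η + η') T = contr ξ η T + contr ξ η' T := by
  have : contr (L := L) ξ (η + η') = contr ξ η + contr ξ η' := by
    ext a v u; simp [mul_add, add_smul]
  rw [this]; rfl

lemma contr_smul_left {V U : Type} [AddCommGroup V] [Module ℂ V] [AddCommGroup U] [Module ℂ U]
    (c : ℂ) (ξ : V →ₗ[ℂ] ℂ) (η : U →ₗ[ℂ] ℂ) (T : L ⊗[ℂ] (V ⊗[ℂ] U)) :
    contr (c • ξ) η T = c • contr ξ η T := by
  have : contr (L := L) (c • ξ) η = c • contr ξ η := by
    ext a v u; simp [mul_assoc, mul_smul]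
  rw [this]; rfl

lemma contr_smul_right {V U : Type} [AddCommGroup V] [Module ℂ V] [AddCommGroup U] [Module ℂ U]
    (c : ℂ) (ξ : V →ₗ[ℂ] ℂ) (η : U →ₗ[ℂ] ℂ) (T : L ⊗[ℂ] (V ⊗[ℂ] U)) :
    contr ξ (c • η) T = c • contr ξ η T := by
  have : contr (L := L) ξ (c • η) = c • contr ξ η := by
    ext a v u; simp [mul_left_comm, mul_smul]
  rw [this]; rfl

lemma contr_lie {V U : Type} [AddCommGroup V] [Module ℂ V] [AddCommGroup U] [Module ℂ U]
    [LieRingModule L V] [LieModule ℂ L V] [LieRingModule L U] [LieModule ℂ L U]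
    (x : L) (ξ : V →ₗ[ℂ] ℂ) (η : U →ₗ[ℂ] ℂ) (T : L ⊗[ℂ] (V ⊗[ℂ] U)) :
    ⁅x, contr ξ η T⁆ = contr ⁅x, ξ⁆ η T + contr ξ ⁅x, η⁆ T + contr ξ η ⁅x, T⁆ := by
  induction T using TensorProduct.induction_on with
  | zero => simp
  | add a b ha hb => simp only [map_add, lie_add, ha, hb]; abel
  | tmul a q =>
    induction q using TensorProduct.induction_on with
    | zero => simp
    | add p q hp hq =>
      simp only [TensorProduct.tmul_add, map_add, lie_add, hp, hq]; abel
    | tmul v u =>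
      simp only [TensorProduct.LieModule.lie_tmul_right, TensorProduct.tmul_add, map_add,
        contr_tmul, Module.Dual.lie_apply, lie_smul]
      module

lemma contr_eq_zero {V U : Type} [AddCommGroup V] [Module ℂ V] [AddCommGroup U] [Module ℂ U]
    [FiniteDimensional ℂ V] [FiniteDimensional ℂ U]
    (T : L ⊗[ℂ] (V ⊗[ℂ] U)) (h : ∀ ξ η, contr ξ η T = 0) : T = 0 := by
  let b := Module.finBasis ℂ V
  let c := Module.finBasis ℂ U
  have hT : ∀ T : L ⊗[ℂ] (V ⊗[ℂ] U),
      T = ∑ i, ∑ k, contr (b.coord i) (c.coord k) T ⊗ₜ[ℂ] (b i ⊗ₜ[ℂ] c k) := by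
    intro T
    induction T using TensorProduct.induction_on with
    | zero => simp
    | add x y hx hy =>
      conv_lhs => rw [hx, hy]
      simp only [map_add, TensorProduct.add_tmul, Finset.sum_add_distrib]
    | tmul a q =>
      induction q using TensorProduct.induction_on with
      | zero => simp
      | add p q hp hq =>
        rw [TensorProduct.tmul_add]
        conv_lhs => rw [hp, hq]
        simp only [map_add, TensorProduct.add_tmul, Finset.sum_add_distrib]
      | tmul v u =>
        conv_lhs => rw [← b.sum_repr v, ← c.sum_repr u]
        simp only [TensorProduct.sum_tmul, TensorProduct.tmul_sum, contr_tmul, Basis.coord_apply]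
        try rw [Finset.sum_comm]
        refine Finset.sum_congr rfl fun i _ => Finset.sum_congr rfl fun k _ => ?_
        rw [TensorProduct.smul_tmul_smul]
        exact (TensorProduct.smul_tmul _ a _).symm
  rw [hT T]
  simp [h]

/-- Suppose `β := ν̄ - μ` is a root, and there is a short simple root
`α_j` (some root of the same simple factor is strictly longer) with `⟨μ, α_j∨⟩ = 0` such
that `β` is weakly orthogonal to `α_j` (`⟨β, α_j⟩ = 0` and `β + α_j` is a root).  Then the
`𝔤`-invariant subspace of `adj(𝔤) ⊗ V_μ ⊗ V_ν` is zero. -/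
theorem statement5
    {L : Type} [LieRing L] [LieAlgebra ℂ L] [FiniteDimensional ℂ L]
    [LieAlgebra.IsSemisimple ℂ L]
    (H : LieSubalgebra ℂ L) [H.IsCartanSubalgebra]
    {r : ℕ} (α : Fin r → Module.Dual ℂ H) (hc : Fin r → H)
    (hbase : IsBase H α) (hcoroot : ∀ j, IsCoroot H (α j) (hc j))
    (μ ν νbar : Module.Dual ℂ H) (hμ : IsDomInt hc μ) (hν : IsDomInt hc ν)
    (Vμ : Type) [AddCommGroup Vμ] [Module ℂ Vμ] [LieRingModule L Vμ]
    [LieModule ℂ L Vμ] [FiniteDimensional ℂ Vμ]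
    (Vν : Type) [AddCommGroup Vν] [Module ℂ Vν] [LieRingModule L Vν]
    [LieModule ℂ L Vν] [FiniteDimensional ℂ Vν]
    (Wν : Type) [AddCommGroup Wν] [Module ℂ Wν] [LieRingModule L Wν]
    [LieModule ℂ L Wν] [FiniteDimensional ℂ Wν]
    (hVμ : IsHWIrrep H α μ Vμ)
    (hVν : IsHWIrrep H α ν Vν) (hWν : IsHWIrrep H α νbar Wν)
    (hdual : IsDualPair (L := L) Wν Vν)
    (hroot : IsRoot H (νbar - μ))
    (j : Fin r)
    (hshort : ∃ (γ : Module.Dual ℂ H) (tα tγ : H), IsRoot H γ ∧ SameFactor H (α j) γ ∧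
      IsKillingDual H (α j) tα ∧ IsKillingDual H γ tγ ∧
      ∃ a b : ℝ, (α j) tα = (a : ℂ) ∧ γ tγ = (b : ℂ) ∧ a < b)
    (hμj : μ (hc j) = 0)
    (horth : ∃ tα : H, IsKillingDual H (α j) tα ∧ (νbar - μ) tα = 0)
    (hsum : IsRoot H ((νbar - μ) + α j)) :
    maxTrivSubmodule ℂ L (L ⊗[ℂ] (Vμ ⊗[ℂ] Vν)) = ⊥ := by
  obtain ⟨hs1, v, hv0, hv, hvP⟩ := hVμ
  obtain ⟨hs3, w, hw0, hw, hwP⟩ := hWν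
  have hvP' : ∀ x, PosV H α x → ⁅x, v⁆ = 0 := fun x ⟨χ, hχ, hx⟩ => hvP χ hχ x hx
  have hwP' : ∀ x, PosV H α x → ⁅x, w⁆ = 0 := fun x ⟨χ, hχ, hx⟩ => hwP χ hχ x hx
  obtain ⟨B, hB1, hB2, hB⟩ := hdual
  have hBl : ∀ (x : L) (w : Wν), ⁅x, B w⁆ = B ⁅x, w⁆ := by
    intro x w
    ext u
    rw [Module.Dual.lie_apply]
    linear_combination -(hB x w u)
  have hBsurj : ∀ η : Vν →ₗ[ℂ] ℂ, ∃ w, B w = η := by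
    have hinj : Function.Injective B := by
      rw [injective_iff_map_eq_zero]
      intro w hw
      exact hB1 w fun u => by rw [hw]; rfl
    have hinj2 : Function.Injective B.flip := by
      rw [injective_iff_map_eq_zero]
      intro u hu
      exact hB2 u fun w => by rw [← LinearMap.flip_apply, hu]; rfl
    have h1 := LinearMap.finrank_le_finrank_of_injective hinj
    have h2 := LinearMap.finrank_le_finrank_of_injective hinj2
    have h3 : finrank ℂ (Vν →ₗ[ℂ] ℂ) = finrank ℂ Vν := Subspace.dual_finrank_eq
    have h4 : finrank ℂ (Wν →ₗ[ℂ] ℂ) = finrank ℂ Wν := Subspace.dual_finrank_eq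
    have h5 : finrank ℂ Wν = finrank ℂ (Vν →ₗ[ℂ] ℂ) := by omega
    exact (LinearMap.injective_iff_surjective_of_finrank_eq_finrank h5).mp hinj
  obtain ⟨ξ, hξ0, hξ, hξN⟩ := exists_functional hbase μ v hv0 hv hvP'
  obtain ⟨h2, e, he, f, hf, hef⟩ := hcoroot j
  have hposj : IsPosRoot H α (α j) := by
    refine ⟨hbase.isRoot j, fun i => if i = j then 1 else 0, ?_⟩
    simp
  have heξ : ⁅e, ξ⁆ = 0 := by
    have T := sl2_of_coroot h2 he hf hef
    have P : T.symm.HasPrimitiveVectorWith ξ (0 : ℂ) :=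
      { ne_zero := hξ0
        lie_h := by rw [neg_lie, hξ]; simp [hμj]
        lie_e := hξN f ⟨α j, hposj, hf⟩ }
    have := P.pow_toEnd_f_eq_zero_of_eq_nat (n := 0) (by simp)
    simpa using this
  obtain ⟨s, hs, hβs⟩ := horth
  have hβt : (νbar - μ) (hc j) = 0 := orth_coroot hf hef hs hβs
  rw [LieSubmodule.eq_bot_iff]
  intro T hT
  rw [mem_maxTrivSubmodule] at hT
  have hCl : ∀ (x : L) (ζ : Vμ →ₗ[ℂ] ℂ) (w : Wν),
      ⁅x, contr ζ (B w) T⁆ = contr ⁅x, ζ⁆ (B w) T + contr ζ (B ⁅x, w⁆) T := by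
    intro x ζ w
    rw [contr_lie, hT x, hBl, map_zero, add_zero]
  have hBz : ∀ ζ : Vμ →ₗ[ℂ] ℂ, contr ζ (0 : Vν →ₗ[ℂ] ℂ) T = 0 := by
    intro ζ
    have := contr_smul_right 0 ζ (0 : Vν →ₗ[ℂ] ℂ) T
    simpa using this
  have hzB : ∀ η : Vν →ₗ[ℂ] ℂ, contr (0 : Vμ →ₗ[ℂ] ℂ) η T = 0 := by
    intro η
    have := contr_smul_left 0 (0 : Vμ →ₗ[ℂ] ℂ) η T
    simpa using this
  have hz : contr ξ (B w) T = 0 := by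
    refine no_kill h2 he hf hef hβt hroot hsum ?_ ?_
    · apply mem_root
      intro h
      rw [hCl, hξ, hw, map_smul, contr_smul_left, contr_smul_right, ← add_smul]
      congr 1
      simp only [LinearMap.neg_apply, LinearMap.sub_apply]
      ring
    · rw [hCl, heξ, hwP' e ⟨α j, hposj, he⟩, map_zero, hBz, hzB, add_zero]
  have hall : ∀ ζ : Vμ →ₗ[ℂ] ℂ, contr ζ (B w) T = 0 := by
    let K : Submodule ℂ (Vμ →ₗ[ℂ] ℂ) :=
      { carrier := {ζ | contr ζ (B w) T = 0}
        add_mem' := fun {a b} ha hb => by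
          show contr (a + b) (B w) T = 0
          rw [contr_add_left, ha, hb, add_zero]
        zero_mem' := hzB _
        smul_mem' := fun c a ha => by
          show contr (c • a) (B w) T = 0
          rw [contr_smul_left, ha, smul_zero] }
    intro ζ
    refine dual_gen hbase (-μ) ξ hξ0 hξ hξN K hz ?_ ζ
    intro x hx m hm
    have hm' : contr m (B w) T = 0 := hm
    have := hCl x m w
    rw [hm', lie_zero, hwP' x hx, map_zero, hBz, add_zero] at this
    exact this.symm
  let A : LieSubmodule ℂ L Wν :=
    { carrier := {w | ∀ ζ : Vμ →ₗ[ℂ] ℂ, contr ζ (B w) T = 0}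
      add_mem' := fun {a b} ha hb ζ => by rw [map_add, contr_add_right, ha, hb, add_zero]
      zero_mem' := fun ζ => by rw [map_zero, hBz]
      smul_mem' := fun c a ha ζ => by rw [map_smul, contr_smul_right, ha, smul_zero]
      lie_mem := fun {x m} hm ζ => by
        have := hCl x ζ m
        have hm' : ∀ ζ : Vμ →ₗ[ℂ] ℂ, contr ζ (B m) T = 0 := hm
        rw [hm', hm', lie_zero, zero_add] at this
        exact this.symm }
  have hA : A = ⊤ := by
    rcases eq_bot_or_eq_top A with h | h
    · exfalso
      have hwA : w ∈ A := hall
      rw [h, LieSubmodule.mem_bot] at hwA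
      exact hw0 hwA
    · exact h
  apply contr_eq_zero
  intro ζ η
  obtain ⟨w', rfl⟩ := hBsurj η
  have : w' ∈ A := by rw [hA]; trivial
  exact this ζ

end AdjPaper
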